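/- Every finitely generated group of orientation-preserving homeomorphisms of the real line is topologically conjugated (by some homeomorphism of ℝ) to a group acting by bilipschitz homeomorphisms. -/

import Mathlib

/-!
A finitely generated group is countable, and countability of `G` is all that the argument uses.

Choose weights `p s > 0` (`s ∈ G`) with total mass at most `1/2`. The equation
`F x = arctan x + ∑ p s * F (s x)` has a unique bounded continuous solution, by the contraction
principle; it is increasing because increasing functions form a closed set preserved by the
contraction. Taking increments in the equation gives `p s * (F (s y) - F (s x)) ≤ F y - F x` for
`x ≤ y`: every element of `G` is Lipschitz in the coordinate `F`
(`exists_strictMono_dominated`).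

This coordinate identifies `ℝ` with a bounded interval `(a, b)` only. The function
`φ = log (F - a) - log (b - F)` maps `ℝ` onto `ℝ`. Since each `g ∈ G` is bilipschitz in the
coordinate `F` and fixes both ends, it changes the distances to `a` and to `b` by a bounded factor
`K`, while it changes increments of `F` by a factor at most `K`. As
`dφ = dF / (F - a) + dF / (b - F)`,
increments of `φ` change by a factor at most `K ^ 2`. The finite form of this last step is
`log_sub_log_le`, a consequence of Bernoulli's inequality.
-/

noncomputable section

noncomputable instance : Group (ℝ ≃ₜ ℝ) where
  mul f g := g.trans f
  one := Homeomorph.refl ℝ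
  inv := Homeomorph.symm
  mul_assoc f g h := rfl
  one_mul f := by ext x; rfl
  mul_one f := by ext x; rfl
  inv_mul_cancel f := by ext x; exact f.symm_apply_apply x

open Filter Topology BoundedContinuousFunction

theorem countable_of_fg (H : Type*) [Group H] (h : Group.FG H) : Countable H := by
  obtain ⟨S, hS, f, hf⟩ := Group.fg_iff_exists_freeGroup_hom_surjective.1 h
  have : Countable S := hS.countable
  have : Countable (FreeGroup S) :=
    (Quot.mk_surjective : Function.Surjective
      (Quot.mk _ : List (S × Bool) → FreeGroup S)).countable
  exact hf.countable

/-- A bounded continuous coordinate, increasing on `ℝ`, in which every element of a countable set of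
increasing homeomorphisms is Lipschitz. It is the fixed point of `F ↦ arctan + ∑ p s * F ∘ s`. -/
theorem exists_strictMono_dominated (Γ : Set (ℝ ≃ₜ ℝ)) (hΓ : Γ.Countable)
    (hmono : ∀ g ∈ Γ, Monotone ⇑g) :
    ∃ F : ℝ →ᵇ ℝ, StrictMono F ∧
      ∀ g ∈ Γ, ∃ K : ℝ, ∀ x y, x ≤ y → F (g y) - F (g x) ≤ K * (F y - F x) := by
  have : Countable Γ := hΓ
  have : Encodable Γ := Encodable.ofCountable Γ
  obtain ⟨p, hp0, c, hpc, hc⟩ := posSumOfEncodable (one_half_pos (α := ℝ)) Γ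
  have hsum : ∀ (F : ℝ →ᵇ ℝ) (x : ℝ), Summable fun s : Γ => p s * F (s.1 x) := fun F x =>
    Summable.of_norm_bounded (hpc.summable.mul_right ‖F‖) fun s => by
      rw [norm_mul, Real.norm_of_nonneg (hp0 s).le]
      exact mul_le_mul_of_nonneg_left (F.norm_coe_le_norm _) (hp0 s).le
  have hcont : ∀ F : ℝ →ᵇ ℝ, Continuous fun x => ∑' s : Γ, p s * F (s.1 x) := fun F =>
    continuous_tsum (fun s => continuous_const.mul (F.continuous.comp s.1.continuous))
      (hpc.summable.mul_right ‖F‖) fun s x => by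
      rw [norm_mul, Real.norm_of_nonneg (hp0 s).le]
      exact mul_le_mul_of_nonneg_left (F.norm_coe_le_norm _) (hp0 s).le
  have hbd : ∀ (F : ℝ →ᵇ ℝ) (x : ℝ), ‖∑' s : Γ, p s * F (s.1 x)‖ ≤ 1 / 2 * ‖F‖ := by
    intro F x
    refine (tsum_of_norm_bounded (hpc.mul_right ‖F‖) fun s => ?_).trans
      (mul_le_mul_of_nonneg_right hc (norm_nonneg _))
    rw [norm_mul, Real.norm_of_nonneg (hp0 s).le]
    exact mul_le_mul_of_nonneg_left (F.norm_coe_le_norm _) (hp0 s).le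
  let A : (ℝ →ᵇ ℝ) → (ℝ →ᵇ ℝ) := fun F =>
    BoundedContinuousFunction.ofNormedAddCommGroup _ (hcont F) _ (hbd F)
  have hA : ∀ F x, A F x = ∑' s : Γ, p s * F (s.1 x) := fun F x => rfl
  -- Any bounded continuous increasing function would do in place of `arctan`.
  let f : ℝ →ᵇ ℝ := BoundedContinuousFunction.ofNormedAddCommGroup Real.arctan
    Real.continuous_arctan (Real.pi / 2) fun x =>
      abs_le.2 ⟨(Real.neg_pi_div_two_lt_arctan x).le, (Real.arctan_lt_pi_div_two x).le⟩
  have hf : StrictMono f := Real.arctan_strictMono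
  have hT : ContractingWith (1 / 2) fun F => f + A F := by
    refine ⟨by rw [← NNReal.coe_lt_coe]; norm_num, LipschitzWith.of_dist_le_mul fun F F' => ?_⟩
    have hsub : A F - A F' = A (F - F') := by
      ext x
      simp only [BoundedContinuousFunction.sub_apply, hA, mul_sub]
      exact ((hsum F x).tsum_sub (hsum F' x)).symm
    rw [dist_add_left, dist_eq_norm, dist_eq_norm, hsub]
    refine (BoundedContinuousFunction.norm_le (by positivity)).2 fun x => ?_
    rw [hA]
    exact (hbd (F - F') x).trans_eq (by simp)
  have hAmono : ∀ F : ℝ →ᵇ ℝ, Monotone F → Monotone (A F) := fun F hF x y hxy =>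
    (hsum F x).tsum_le_tsum
      (fun s => mul_le_mul_of_nonneg_left (hF (hmono _ s.2 hxy)) (hp0 s).le) (hsum F y)
  obtain ⟨F, hFT⟩ : ∃ F, F = hT.fixedPoint := ⟨_, rfl⟩
  have hfix : ∀ x, F x = f x + ∑' s : Γ, p s * F (s.1 x) := fun x =>
    DFunLike.congr_fun (hFT ▸ hT.fixedPoint_isFixedPt.symm : F = f + A F) x
  -- Monotone functions form a closed invariant set of the contraction.
  have hFmono : Monotone F := by
    have hlim := hT.tendsto_iterate_fixedPoint f
    rw [← hFT] at hlim
    have hiter : ∀ n, Monotone ((fun F => f + A F)^[n] f) := by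
      intro n
      induction n with
      | zero => exact hf.monotone
      | succ n ih =>
        rw [Function.iterate_succ_apply']
        exact hf.monotone.add (hAmono _ ih)
    intro x y hxy
    have hev : ∀ z, Tendsto (fun n => ((fun F => f + A F)^[n] f) z) atTop (𝓝 (F z)) := fun z =>
      ((BoundedContinuousFunction.lipschitz_eval_const z).continuous.tendsto F).comp hlim
    exact le_of_tendsto_of_tendsto' (hev x) (hev y) fun n => hiter n hxy
  have hnn : ∀ x y, x ≤ y → ∀ s : Γ, 0 ≤ p s * F (s.1 y) - p s * F (s.1 x) :=
    fun x y hxy s => sub_nonneg.2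
      (mul_le_mul_of_nonneg_left (hFmono (hmono _ s.2 hxy)) (hp0 s).le)
  have hdiff : ∀ x y, F y - F x =
      (f y - f x) + ∑' s : Γ, (p s * F (s.1 y) - p s * F (s.1 x)) := by
    intro x y
    rw [(hsum F y).tsum_sub (hsum F x), hfix x, hfix y]; ring
  refine ⟨F, fun x y hxy => ?_, fun g hg => ⟨(p ⟨g, hg⟩)⁻¹, fun x y hxy => ?_⟩⟩
  · have h1 := hdiff x y
    have h2 : 0 ≤ ∑' s : Γ, (p s * F (s.1 y) - p s * F (s.1 x)) :=
      tsum_nonneg (hnn x y hxy.le)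
    have h3 := hf hxy
    linarith
  · have h1 := hdiff x y
    have h2 := ((hsum F y).sub (hsum F x)).le_tsum ⟨g, hg⟩ fun s _ => hnn x y hxy s
    have h3 := hf.monotone hxy
    rw [inv_mul_eq_div, le_div_iff₀ (hp0 _)]
    simp only at h2
    linarith

/-- If passing from `u ≤ v` to `u', v'` multiplies the increment by at most `K` and divides the left
end by at most `K`, then it multiplies the logarithmic increment by at most `K ^ 2`. -/
theorem log_sub_log_le {u v u' v' K : ℝ} (hK : 1 ≤ K) (hu : 0 < u) (huv : u ≤ v)
    (hu' : 0 < u') (hv' : 0 < v') (h1 : v' - u' ≤ K * (v - u)) (h2 : u ≤ K * u') :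
    Real.log v' - Real.log u' ≤ K ^ 2 * (Real.log v - Real.log u) := by
  have hv : 0 < v := hu.trans_le huv
  -- Bernoulli: `1 + K² t ≤ (1 + t) ^ K²` with `t = v / u - 1`.
  rw [← Real.log_div hv'.ne' hu'.ne', ← Real.log_div hv.ne' hu.ne',
    ← Real.log_rpow (div_pos hv hu)]
  refine Real.log_le_log (div_pos hv' hu') ?_
  have hb := one_add_mul_self_le_rpow_one_add (s := v / u - 1) (p := K ^ 2)
    (by have := div_pos hv hu; linarith) (one_le_pow₀ hK)
  rw [add_sub_cancel] at hb
  refine le_trans ?_ hb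
  have h3 : v' / u' = 1 + (v' - u') / u' := by field_simp; ring
  have h4 : K ^ 2 * (v / u - 1) = K ^ 2 * (v - u) / u := by field_simp
  rw [h3, h4, add_le_add_iff_left, div_le_div_iff₀ hu' hu]
  have h5 : 0 ≤ K * (v - u) := mul_nonneg (by linarith) (by linarith)
  calc (v' - u') * u ≤ K * (v - u) * u := mul_le_mul_of_nonneg_right h1 hu.le
    _ ≤ K * (v - u) * (K * u') := mul_le_mul_of_nonneg_left h2 h5
    _ = K ^ 2 * (v - u) * u' := by ring

/-- A bounded increasing coordinate `F` can be stretched to a homeomorphism `φ` of `ℝ` in such a way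
that every increasing bijection `g` that is `K`-bilipschitz for `F` is `K ^ 2`-Lipschitz for `φ`. -/
theorem exists_homeomorph (F : ℝ →ᵇ ℝ) (hF : StrictMono F) :
    ∃ φ : ℝ ≃ₜ ℝ, StrictMono φ ∧ ∀ (g h : ℝ → ℝ) (K : ℝ), 1 ≤ K → Monotone g →
      Monotone h → (∀ x, h (g x) = x) → (∀ x, g (h x) = x) →
      (∀ x y, x ≤ y → F (g y) - F (g x) ≤ K * (F y - F x)) →
      (∀ x y, x ≤ y → F (h y) - F (h x) ≤ K * (F y - F x)) →
      ∀ x y, x ≤ y → φ (g y) - φ (g x) ≤ K ^ 2 * (φ y - φ x) := by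
  obtain ⟨a, ha⟩ : ∃ a, a = ⨅ x, F x := ⟨_, rfl⟩
  obtain ⟨b, hb⟩ : ∃ b, b = ⨆ x, F x := ⟨_, rfl⟩
  have hbot : Tendsto F atBot (𝓝 a) :=
    ha ▸ tendsto_atBot_ciInf hF.monotone F.isBounded_range.bddBelow
  have htop : Tendsto F atTop (𝓝 b) :=
    hb ▸ tendsto_atTop_ciSup hF.monotone F.isBounded_range.bddAbove
  have haF : ∀ x, 0 < F x - a := fun x => by
    have h1 : a ≤ F (x - 1) := hF.monotone.le_of_tendsto hbot _
    have h2 := hF (sub_one_lt x)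
    linarith
  have hFb : ∀ x, 0 < b - F x := fun x => by
    have h1 : F (x + 1) ≤ b := hF.monotone.ge_of_tendsto htop _
    have h2 := hF (lt_add_one x)
    linarith
  have hab : 0 < b - a := by linarith [haF 0, hFb 0]
  let ψ : ℝ → ℝ := fun x => Real.log (F x - a) + -Real.log (b - F x)
  have hψ : StrictMono ψ := fun x y hxy =>
    add_lt_add (Real.log_lt_log (haF x) (by linarith [hF hxy]))
      (neg_lt_neg (Real.log_lt_log (hFb y) (by linarith [hF hxy])))
  have hψc : Continuous ψ :=
    ((F.continuous.sub continuous_const).log fun x => (haF x).ne').add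
      ((continuous_const.sub F.continuous).log fun x => (hFb x).ne').neg
  have hψtop : Tendsto ψ atTop atTop := by
    have h1 : Tendsto (fun x => b - F x) atTop (𝓝[>] 0) :=
      tendsto_nhdsWithin_iff.2 ⟨by simpa using htop.const_sub b, Eventually.of_forall hFb⟩
    exact ((htop.sub_const a).log hab.ne').add_atTop
      (tendsto_neg_atBot_atTop.comp (Real.tendsto_log_nhdsGT_zero.comp h1))
  have hψbot : Tendsto ψ atBot atBot := by
    have h1 : Tendsto (fun x => F x - a) atBot (𝓝[>] 0) :=
      tendsto_nhdsWithin_iff.2 ⟨by simpa using hbot.sub_const a, Eventually.of_forall haF⟩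
    exact (Real.tendsto_log_nhdsGT_zero.comp h1).atBot_add
      ((hbot.const_sub b).log hab.ne').neg
  refine ⟨(hψ.orderIsoOfSurjective ψ (hψc.surjective hψtop hψbot)).toHomeomorph, hψ, ?_⟩
  intro g h K hK hg hh hhg hgh hgK hhK x y hxy
  have hgbot : Tendsto g atBot atBot :=
    tendsto_atBot_atBot.2 fun z => ⟨h z, fun w hw => hgh z ▸ hg hw⟩
  have hhbot : Tendsto h atBot atBot :=
    tendsto_atBot_atBot.2 fun z => ⟨g z, fun w hw => hhg z ▸ hh hw⟩
  have hhtop : Tendsto h atTop atTop :=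
    tendsto_atTop_atTop.2 fun z => ⟨g z, fun w hw => hhg z ▸ hh hw⟩
  -- Letting one endpoint in the estimate for `h = g⁻¹` go to `∓∞` shows that `g` shrinks the
  -- distance to either end of `(a, b)` by a factor at most `K`.
  have hlo : F x - a ≤ K * (F (g x) - a) := by
    refine le_of_tendsto_of_tendsto ((hbot.comp hhbot).const_sub (F x))
      ((hbot.const_sub (F (g x))).const_mul K) ?_
    filter_upwards [eventually_le_atBot (g x)] with z hz
    simpa [hhg] using hhK z (g x) hz
  have hhi : b - F y ≤ K * (b - F (g y)) := by
    refine le_of_tendsto_of_tendsto ((htop.comp hhtop).sub_const (F y))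
      ((htop.sub_const (F (g y))).const_mul K) ?_
    filter_upwards [eventually_ge_atTop (g y)] with z hz
    simpa [hhg] using hhK (g y) z hz
  have hFxy := hF.monotone hxy
  have hgxy := hgK x y hxy
  have e1 := log_sub_log_le hK (haF x) (by linarith : F x - a ≤ F y - a) (haF (g x))
    (haF (g y)) (by linarith) hlo
  have e2 := log_sub_log_le hK (hFb y) (by linarith : b - F y ≤ b - F x) (hFb (g y))
    (hFb (g x)) (by linarith) hhi
  change (Real.log (F (g y) - a) + -Real.log (b - F (g y))) -
    (Real.log (F (g x) - a) + -Real.log (b - F (g x))) ≤ K ^ 2 *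
    ((Real.log (F y - a) + -Real.log (b - F y)) - (Real.log (F x - a) + -Real.log (b - F x)))
  linarith

/-- Every finitely generated group of orientation-preserving homeomorphisms of the real
line is topologically conjugated to a group acting by bilipschitz homeomorphisms. -/
theorem conjugate_to_bilipschitz (G : Subgroup (ℝ ≃ₜ ℝ)) (hFG : Group.FG G)
    (hmono : ∀ g ∈ G, Monotone ⇑g) :
    ∃ φ : ℝ ≃ₜ ℝ, ∀ g ∈ G, ∃ K : ℝ, 1 ≤ K ∧ ∀ x y : ℝ,
      K⁻¹ * |y - x| ≤ |φ (g (φ.symm y)) - φ (g (φ.symm x))| ∧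
      |φ (g (φ.symm y)) - φ (g (φ.symm x))| ≤ K * |y - x| := by
  have hcount : (G : Set (ℝ ≃ₜ ℝ)).Countable := countable_of_fg G hFG
  obtain ⟨F, hF, hdom⟩ := exists_strictMono_dominated G hcount hmono
  obtain ⟨φ, hφ, hest⟩ := exists_homeomorph F hF
  refine ⟨φ, fun g hg => ?_⟩
  have hg' : g.symm ∈ G := G.inv_mem hg
  obtain ⟨K₁, hK₁⟩ := hdom g hg
  obtain ⟨K₂, hK₂⟩ := hdom g.symm hg'
  obtain ⟨K, hK, h1, h2⟩ : ∃ K : ℝ, 1 ≤ K ∧ K₁ ≤ K ∧ K₂ ≤ K :=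
    ⟨max 1 (max K₁ K₂), by simp, by simp, by simp⟩
  have hw : ∀ x y, x ≤ y → 0 ≤ F y - F x := fun x y hxy => sub_nonneg.2 (hF.monotone hxy)
  have hgK : ∀ x y, x ≤ y → F (g y) - F (g x) ≤ K * (F y - F x) := fun x y hxy =>
    (hK₁ x y hxy).trans (mul_le_mul_of_nonneg_right h1 (hw x y hxy))
  have hgK' : ∀ x y, x ≤ y → F (g.symm y) - F (g.symm x) ≤ K * (F y - F x) := fun x y hxy =>
    (hK₂ x y hxy).trans (mul_le_mul_of_nonneg_right h2 (hw x y hxy))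
  have e1 := hest g g.symm K hK (hmono g hg) (hmono _ hg') g.symm_apply_apply
    g.apply_symm_apply hgK hgK'
  have e2 := hest g.symm g K hK (hmono _ hg') (hmono g hg) g.apply_symm_apply
    g.symm_apply_apply hgK' hgK
  have hK2 : 0 < K ^ 2 := by positivity
  have key : ∀ u v, u ≤ v → (K ^ 2)⁻¹ * |φ v - φ u| ≤ |φ (g v) - φ (g u)| ∧
      |φ (g v) - φ (g u)| ≤ K ^ 2 * |φ v - φ u| := by
    intro u v huv
    have hguv := hmono g hg huv
    rw [abs_of_nonneg (sub_nonneg.2 (hφ.monotone huv)),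
      abs_of_nonneg (sub_nonneg.2 (hφ.monotone hguv)), inv_mul_le_iff₀ hK2]
    exact ⟨by simpa using e2 _ _ hguv, e1 _ _ huv⟩
  refine ⟨K ^ 2, one_le_pow₀ hK, fun x y => ?_⟩
  rcases le_total (φ.symm x) (φ.symm y) with h | h
  · simpa using key _ _ h
  · rw [abs_sub_comm y x, abs_sub_comm (φ (g (φ.symm y)))]
    simpa using key _ _ h
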